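/- A nonnegative integer n is expressible as a sum of three squares of integers if and only if n is not of the form 4^k(8s+7) for some nonnegative integers k and s. -/

import Mathlib

/-!
A number `7 mod 8` is not a sum of three squares, and if `4 ∣ a² + b² + c²` then `a`, `b`, `c` are
all even; this excludes the numbers `4ᵏ(8s + 7)` and reduces the converse to `n` with `4 ∤ n` and
`n ≢ 7 mod 8`.

Every positive definite integral ternary form of determinant one is equivalent to `x² + y² + z²`,
since reduction bounds its first coefficient by a number less than `2`. It remains to represent `n`
by such a form. If `bn - 1` divides `t² + b`, say `t² + b = a(bn - 1)`, then
`a x² + (bn - 1) y² + n z² + 2t xy + 2xz` will do. Dirichlet's theorem provides a `b` for which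
`bn - 1` is a prime or twice a prime, and quadratic reciprocity makes `-b` a square modulo it.
-/

open Matrix
open scoped NumberTheorySymbols

section Congruence

variable {m R : Type*} [Fintype m] [DecidableEq m] [CommRing R]

/-- Proper equivalence of the quadratic forms with Gram matrices `A` and `B`: a linear change of
variables of determinant one carries one form to the other. -/
def ProperlyEquivalent (A B : Matrix m m R) : Prop :=
  ∃ U : Matrix m m R, U.det = 1 ∧ B = Uᵀ * A * U

namespace ProperlyEquivalent

variable {A B C : Matrix m m R}

theorem refl (A : Matrix m m R) : ProperlyEquivalent A A :=
  ⟨1, det_one, by simp⟩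

theorem trans (hAB : ProperlyEquivalent A B) (hBC : ProperlyEquivalent B C) :
    ProperlyEquivalent A C := by
  obtain ⟨U, hU, rfl⟩ := hAB
  obtain ⟨V, hV, rfl⟩ := hBC
  exact ⟨U * V, by rw [det_mul, hU, hV, one_mul], by simp only [transpose_mul, Matrix.mul_assoc]⟩

theorem symm (hAB : ProperlyEquivalent A B) : ProperlyEquivalent B A := by
  obtain ⟨U, hU, rfl⟩ := hAB
  have hinv : U * U⁻¹ = 1 := mul_nonsing_inv U (by simp [hU])
  refine ⟨U⁻¹, by simp [det_nonsing_inv, hU], ?_⟩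
  calc A = (U * U⁻¹)ᵀ * A * (U * U⁻¹) := by simp [hinv]
    _ = U⁻¹ᵀ * (Uᵀ * A * U) * U⁻¹ := by simp only [transpose_mul, Matrix.mul_assoc]

theorem det_eq (hAB : ProperlyEquivalent A B) : A.det = B.det := by
  obtain ⟨U, hU, rfl⟩ := hAB
  simp [hU]

theorem posDef [PartialOrder R] [StarRing R] [TrivialStar R] (hAB : ProperlyEquivalent A B)
    (hA : A.PosDef) : B.PosDef := by
  obtain ⟨U, hU, rfl⟩ := hAB
  rw [← conjTranspose_eq_transpose_of_trivial]
  exact hA.conjTranspose_mul_mul_same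
    (mulVec_injective_of_isUnit ((isUnit_iff_isUnit_det U).mpr (by simp [hU])))

end ProperlyEquivalent

end Congruence

section LeadingMinor

variable {R : Type*} [CommRing R] {A : Matrix (Fin 3) (Fin 3) R}

/-- The leading principal `2 × 2` minor of a symmetric `3 × 3` matrix. -/
def leadingMinor (A : Matrix (Fin 3) (Fin 3) R) : R :=
  A 0 0 * A 1 1 - A 0 1 ^ 2

theorem det_eq_of_isSymm (hA : A.IsSymm) :
    A.det = A 0 0 * A 1 1 * A 2 2 + 2 * A 0 1 * A 0 2 * A 1 2 - A 0 0 * A 1 2 ^ 2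
      - A 1 1 * A 0 2 ^ 2 - A 2 2 * A 0 1 ^ 2 := by
  rw [det_fin_three, hA.apply 0 1, hA.apply 0 2, hA.apply 1 2]
  ring

-- Jacobi's identity: a `2 × 2` minor of the adjugate matrix.
theorem leadingMinor_mul_sub_sq (hA : A.IsSymm) :
    leadingMinor A * (A 0 0 * A 2 2 - A 0 2 ^ 2) - (A 0 0 * A 1 2 - A 0 1 * A 0 2) ^ 2 =
      A 0 0 * A.det := by
  rw [det_eq_of_isSymm hA, leadingMinor]
  ring

-- Completing the square twice, with denominators cleared.
theorem mul_leadingMinor_mul_dotProduct_mulVec (hA : A.IsSymm) (v : Fin 3 → R) :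
    A 0 0 * leadingMinor A * (v ⬝ᵥ A *ᵥ v) =
      leadingMinor A * (A 0 0 * v 0 + A 0 1 * v 1 + A 0 2 * v 2) ^ 2
        + (leadingMinor A * v 1 + (A 0 0 * A 1 2 - A 0 1 * A 0 2) * v 2) ^ 2
        + A 0 0 * A.det * v 2 ^ 2 := by
  simp only [det_eq_of_isSymm hA, leadingMinor, dotProduct, mulVec, Fin.sum_univ_three,
    hA.apply 0 1, hA.apply 0 2, hA.apply 1 2]
  ring

theorem exists_properlyEquivalent_apply_zero_zero_eq (A : Matrix (Fin 3) (Fin 3) R) :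
    ∃ B, ProperlyEquivalent A B ∧ B 0 0 = A 1 1 := by
  refine ⟨_, ⟨!![0, -1, 0; 1, 0, 0; 0, 0, 1], by simp [det_fin_three], rfl⟩, ?_⟩
  simp [Matrix.mul_apply, Fin.sum_univ_three]

theorem exists_properlyEquivalent_leadingMinor_eq (A : Matrix (Fin 3) (Fin 3) R) :
    ∃ B, ProperlyEquivalent A B ∧ B 0 0 = A 0 0 ∧
      leadingMinor B = A 0 0 * A 2 2 - A 0 2 ^ 2 := by
  refine ⟨_, ⟨!![1, 0, 0; 0, 0, -1; 0, 1, 0], by simp [det_fin_three], rfl⟩, ?_, ?_⟩ <;>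
    simp [leadingMinor, Matrix.mul_apply, Fin.sum_univ_three]

variable [LinearOrder R] [IsStrictOrderedRing R] [StarRing R] [TrivialStar R]

theorem posDef_of_leadingMinor_pos (hA : A.IsSymm) (h₁ : 0 < A 0 0) (h₂ : 0 < leadingMinor A)
    (h₃ : 0 < A.det) : A.PosDef := by
  refine .of_dotProduct_mulVec_pos (isHermitian_iff_isSymm.mpr hA) fun v hv ↦ ?_
  rw [star_trivial]
  by_contra! hneg
  have hsum := mul_leadingMinor_mul_dotProduct_mulVec hA v
  have hle : A 0 0 * leadingMinor A * (v ⬝ᵥ A *ᵥ v) ≤ 0 :=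
    mul_nonpos_of_nonneg_of_nonpos (by positivity) hneg
  set x := A 0 0 * v 0 + A 0 1 * v 1 + A 0 2 * v 2 with hx
  set y := leadingMinor A * v 1 + (A 0 0 * A 1 2 - A 0 1 * A 0 2) * v 2 with hy
  have hx2 : 0 ≤ leadingMinor A * x ^ 2 := by positivity
  have hy2 : 0 ≤ y ^ 2 := by positivity
  have hz2 : 0 ≤ A 0 0 * A.det * v 2 ^ 2 := by positivity
  have hv2 : v 2 = 0 := by
    have : A 0 0 * A.det * v 2 ^ 2 = 0 := by linarith
    simpa [h₁.ne', h₃.ne'] using this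
  have hv1 : v 1 = 0 := by
    have : y ^ 2 = 0 := by linarith
    simpa [hy, hv2, h₂.ne'] using this
  have hv0 : v 0 = 0 := by
    have : leadingMinor A * x ^ 2 = 0 := by linarith
    simpa [hx, hv1, hv2, h₁.ne', h₂.ne'] using this
  exact hv (funext fun i ↦ by fin_cases i <;> assumption)

theorem leadingMinor_pos (hA : A.PosDef) : 0 < leadingMinor A := by
  have hpos : 0 < A 0 0 := hA.diag_pos
  have hsymm : A.IsSymm := isHermitian_iff_isSymm.mp hA.isHermitian
  have hv : (![-A 0 1, A 0 0, 0] : Fin 3 → R) ≠ 0 := fun h ↦ hpos.ne' (congrFun h 1)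
  have hval := hA.dotProduct_mulVec_pos hv
  have heq : star ![-A 0 1, A 0 0, 0] ⬝ᵥ (A *ᵥ ![-A 0 1, A 0 0, 0]) = A 0 0 * leadingMinor A := by
    rw [star_trivial]
    simp only [dotProduct, mulVec, Fin.sum_univ_three, cons_val, leadingMinor, hsymm.apply 0 1]
    ring
  exact pos_of_mul_pos_right (heq ▸ hval) hpos.le

end LeadingMinor

section Reduction

variable {R : Type*} [CommRing R] [LinearOrder R]

/-- Size reduction of a symmetric `3 × 3` matrix: the off-diagonal Gram–Schmidt coefficients
`A₀₁ / A₀₀`, `A₀₂ / A₀₀` and `(A₀₀ A₁₂ - A₀₁ A₀₂) / leadingMinor A` are at most `1/2` in absolute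
value. -/
structure IsSizeReduced (A : Matrix (Fin 3) (Fin 3) R) : Prop where
  two_mul_abs_zero_one_le : 2 * |A 0 1| ≤ A 0 0
  two_mul_abs_zero_two_le : 2 * |A 0 2| ≤ A 0 0
  two_mul_abs_minor_le : 2 * |A 0 0 * A 1 2 - A 0 1 * A 0 2| ≤ leadingMinor A

/-- Reduction of a symmetric `3 × 3` matrix: it is size reduced, and neither its first diagonal
entry nor its leading `2 × 2` minor can be decreased by exchanging two adjacent variables. -/
structure IsHermiteReduced (A : Matrix (Fin 3) (Fin 3) R) : Prop extends IsSizeReduced A where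
  diag_le : A 0 0 ≤ A 1 1
  minor_le : leadingMinor A ≤ A 0 0 * A 2 2 - A 0 2 ^ 2

variable {A : Matrix (Fin 3) (Fin 3) R} [IsStrictOrderedRing R]

theorem four_mul_sq_le_sq_of_two_mul_abs_le {x y : R} (h : 2 * |x| ≤ y) : 4 * x ^ 2 ≤ y ^ 2 := by
  calc 4 * x ^ 2 = (2 * |x|) ^ 2 := by rw [mul_pow, sq_abs]; norm_num
    _ ≤ y ^ 2 := by gcongr

namespace IsHermiteReduced

theorem three_mul_sq_le_four_mul_leadingMinor (hred : IsHermiteReduced A) (hpos : 0 ≤ A 0 0) :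
    3 * A 0 0 ^ 2 ≤ 4 * leadingMinor A := by
  have hsq := four_mul_sq_le_sq_of_two_mul_abs_le hred.two_mul_abs_zero_one_le
  have hdiag : A 0 0 * A 0 0 ≤ A 0 0 * A 1 1 := mul_le_mul_of_nonneg_left hred.diag_le hpos
  rw [leadingMinor]
  linarith

theorem three_mul_leadingMinor_sq_le (hred : IsHermiteReduced A) (hsymm : A.IsSymm)
    (hminor : 0 ≤ leadingMinor A) : 3 * leadingMinor A ^ 2 ≤ 4 * (A 0 0 * A.det) := by
  have hsq := four_mul_sq_le_sq_of_two_mul_abs_le hred.two_mul_abs_minor_le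
  have hle := mul_le_mul_of_nonneg_left hred.minor_le hminor
  have hjacobi := leadingMinor_mul_sub_sq hsymm
  linarith

-- Hermite's bound on the minimum of a ternary form.
theorem twentySeven_mul_cube_le (hred : IsHermiteReduced A) (hsymm : A.IsSymm) (hpos : 0 < A 0 0)
    (hminor : 0 ≤ leadingMinor A) : 27 * A 0 0 ^ 3 ≤ 64 * A.det := by
  refine le_of_mul_le_mul_left ?_ hpos
  calc A 0 0 * (27 * A 0 0 ^ 3) = 3 * (3 * A 0 0 ^ 2) ^ 2 := by ring
    _ ≤ 3 * (4 * leadingMinor A) ^ 2 := by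
      gcongr 3 * ?_ ^ 2
      exact hred.three_mul_sq_le_four_mul_leadingMinor hpos.le
    _ = 16 * (3 * leadingMinor A ^ 2) := by ring
    _ ≤ 16 * (4 * (A 0 0 * A.det)) := by
      gcongr 16 * ?_
      exact hred.three_mul_leadingMinor_sq_le hsymm hminor
    _ = A 0 0 * (64 * A.det) := by ring

end IsHermiteReduced

end Reduction

section Integral

variable {A : Matrix (Fin 3) (Fin 3) ℤ}

theorem exists_two_mul_abs_add_mul_le (t : ℤ) {s : ℤ} (hs : 0 < s) :
    ∃ k : ℤ, 2 * |t + k * s| ≤ s := by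
  have hround := abs_sub_round ((t : ℚ) / s)
  have hs' : (0 : ℚ) < s := by exact_mod_cast hs
  refine ⟨-round ((t : ℚ) / s), ?_⟩
  have heq : (t : ℚ) + -round ((t : ℚ) / s) * s = (t / s - round ((t : ℚ) / s)) * s := by
    field_simp
    ring
  have hle : 2 * |(t : ℚ) + -round ((t : ℚ) / s) * s| ≤ s := by
    rw [heq, abs_mul, abs_of_pos hs']
    linarith [mul_le_mul_of_nonneg_right hround hs'.le]
  exact_mod_cast hle

theorem exists_properlyEquivalent_isSizeReduced (hA : A.PosDef) :
    ∃ B, ProperlyEquivalent A B ∧ B 0 0 = A 0 0 ∧ leadingMinor B = leadingMinor A ∧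
      IsSizeReduced B := by
  have hsymm : A.IsSymm := isHermitian_iff_isSymm.mp hA.isHermitian
  have hpos : 0 < A 0 0 := hA.diag_pos
  obtain ⟨k, hk⟩ := exists_two_mul_abs_add_mul_le (A 0 0 * A 1 2 - A 0 1 * A 0 2)
    (leadingMinor_pos hA)
  obtain ⟨l, hl⟩ := exists_two_mul_abs_add_mul_le (A 0 1) hpos
  obtain ⟨m, hm⟩ := exists_two_mul_abs_add_mul_le (A 0 2 + k * A 0 1) hpos
  let U : Matrix (Fin 3) (Fin 3) ℤ := !![1, l, m; 0, 1, k; 0, 0, 1]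
  let B := Uᵀ * A * U
  have h00 : B 0 0 = A 0 0 := by
    simp [B, U, Matrix.mul_apply, Fin.sum_univ_three]
  have h01 : B 0 1 = A 0 1 + l * A 0 0 := by
    simp only [B, U, Matrix.mul_apply, Fin.sum_univ_three, transpose_apply, of_apply, cons_val]
    ring
  have h02 : B 0 2 = A 0 2 + k * A 0 1 + m * A 0 0 := by
    simp only [B, U, Matrix.mul_apply, Fin.sum_univ_three, transpose_apply, of_apply, cons_val]
    ring
  have hminor : leadingMinor B = leadingMinor A := by
    simp only [B, U, leadingMinor, Matrix.mul_apply, Fin.sum_univ_three, transpose_apply, of_apply,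
      cons_val, hsymm.apply 0 1]
    ring
  have hminor' : B 0 0 * B 1 2 - B 0 1 * B 0 2 =
      A 0 0 * A 1 2 - A 0 1 * A 0 2 + k * leadingMinor A := by
    simp only [B, U, leadingMinor, Matrix.mul_apply, Fin.sum_univ_three, transpose_apply, of_apply,
      cons_val, hsymm.apply 0 1]
    ring
  refine ⟨B, ⟨U, by simp [U, det_fin_three], rfl⟩, h00, hminor, ?_, ?_, ?_⟩
  · rwa [h00, h01]
  · rwa [h00, h02]
  · rwa [hminor, hminor']

theorem exists_properlyEquivalent_lex_minimal (hA : A.PosDef) :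
    ∃ B, ProperlyEquivalent A B ∧ ∀ C, ProperlyEquivalent A C →
      B 0 0 ≤ C 0 0 ∧ (C 0 0 = B 0 0 → leadingMinor B ≤ leadingMinor C) := by
  obtain ⟨B, hAB, hmin⟩ := exists_minimalFor_of_wellFoundedLT (ProperlyEquivalent A)
    (fun B ↦ toLex ((B 0 0).toNat, (leadingMinor B).toNat)) ⟨A, .refl A⟩
  have hpos {C} (hAC : ProperlyEquivalent A C) : 0 < C 0 0 ∧ 0 < leadingMinor C :=
    ⟨(hAC.posDef hA).diag_pos, leadingMinor_pos (hAC.posDef hA)⟩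
  refine ⟨B, hAB, fun C hAC ↦ ?_⟩
  have hB := hpos hAB
  have hC := hpos hAC
  have hle := not_lt_iff_le_imp_ge.mpr (hmin hAC)
  simp only [Prod.Lex.toLex_lt_toLex, not_or, not_and] at hle
  lia

theorem exists_properlyEquivalent_isHermiteReduced (hA : A.PosDef) :
    ∃ B, ProperlyEquivalent A B ∧ IsHermiteReduced B := by
  obtain ⟨B, hAB, hmin⟩ := exists_properlyEquivalent_lex_minimal hA
  obtain ⟨C, hBC, h00, hminor, hsize⟩ := exists_properlyEquivalent_isSizeReduced (hAB.posDef hA)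
  have hAC := hAB.trans hBC
  refine ⟨C, hAC, hsize, ?_, ?_⟩
  · obtain ⟨D, hCD, hD⟩ := exists_properlyEquivalent_apply_zero_zero_eq C
    rw [h00, ← hD]
    exact (hmin D (hAC.trans hCD)).1
  · obtain ⟨D, hCD, hD, hDminor⟩ := exists_properlyEquivalent_leadingMinor_eq C
    rw [hminor, ← hDminor]
    exact (hmin D (hAC.trans hCD)).2 (hD.trans h00)

theorem IsHermiteReduced.eq_one (hred : IsHermiteReduced A) (hA : A.PosDef) (hdet : A.det = 1) :
    A = 1 := by
  have hsymm : A.IsSymm := isHermitian_iff_isSymm.mp hA.isHermitian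
  have hpos : 0 < A 0 0 := hA.diag_pos
  have hminor_pos := leadingMinor_pos hA
  have h00 : A 0 0 = 1 := by
    have hcube := hred.twentySeven_mul_cube_le hsymm hpos hminor_pos.le
    rw [hdet] at hcube
    by_contra hne
    have : 2 ^ 3 ≤ A 0 0 ^ 3 := by
      gcongr
      lia
    lia
  have hminor : leadingMinor A = 1 := by
    have hsq := hred.three_mul_leadingMinor_sq_le hsymm hminor_pos.le
    rw [h00, hdet] at hsq
    nlinarith
  have h01 : A 0 1 = 0 := by
    have := hred.two_mul_abs_zero_one_le
    exact Int.abs_lt_one_iff.mp (by lia)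
  have h02 : A 0 2 = 0 := by
    have := hred.two_mul_abs_zero_two_le
    exact Int.abs_lt_one_iff.mp (by lia)
  have h12 : A 1 2 = 0 := by
    have := hred.two_mul_abs_minor_le
    rw [h00, h01, hminor] at this
    exact Int.abs_lt_one_iff.mp (by lia)
  have h11 : A 1 1 = 1 := by simpa [leadingMinor, h00, h01] using hminor
  have h22 : A 2 2 = 1 := by simpa [det_eq_of_isSymm hsymm, h00, h01, h02, h11, h12] using hdet
  ext i j
  fin_cases i <;> fin_cases j <;>
    simp [h00, h01, h02, h11, h12, h22, hsymm.apply 0 1, hsymm.apply 0 2, hsymm.apply 1 2]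

theorem exists_eq_transpose_mul_self (hA : A.PosDef) (hdet : A.det = 1) :
    ∃ U : Matrix (Fin 3) (Fin 3) ℤ, A = Uᵀ * U := by
  obtain ⟨B, hAB, hred⟩ := exists_properlyEquivalent_isHermiteReduced hA
  obtain rfl : B = 1 := hred.eq_one (hAB.posDef hA) (hAB.det_eq.symm.trans hdet)
  obtain ⟨U, -, hU⟩ := hAB.symm
  exact ⟨U, by simpa using hU⟩

end Integral

/-- `n` is a sum of three integer squares. -/
def IsSumOfThreeSquares (n : ℤ) : Prop :=
  ∃ a b c : ℤ, n = a ^ 2 + b ^ 2 + c ^ 2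

namespace IsSumOfThreeSquares

theorem of_dvd_sq_add {n b t : ℤ} (hb : 0 < b) (hn : 1 < b * n) (hdvd : b * n - 1 ∣ t ^ 2 + b) :
    IsSumOfThreeSquares n := by
  obtain ⟨a, ha⟩ := hdvd
  have hprod : 0 < (b * n - 1) * a := by
    rw [← ha]
    positivity
  have hapos : 0 < a := pos_of_mul_pos_right hprod (by lia)
  let A : Matrix (Fin 3) (Fin 3) ℤ := !![a, t, 1; t, b * n - 1, 0; 1, 0, n]
  have hsymm : A.IsSymm := by
    ext i j
    fin_cases i <;> fin_cases j <;> rfl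
  have hminor : leadingMinor A = b := by
    simp only [A, leadingMinor, of_apply, cons_val]
    linarith
  have hdet : A.det = 1 := by
    simp only [A, det_fin_three, of_apply, cons_val]
    linear_combination -n * ha
  obtain ⟨U, hU⟩ := exists_eq_transpose_mul_self
    (posDef_of_leadingMinor_pos hsymm hapos (hminor ▸ hb) (hdet ▸ one_pos)) hdet
  refine ⟨U 0 2, U 1 2, U 2 2, ?_⟩
  have h22 := congrFun₂ hU 2 2
  simpa [A, Matrix.mul_apply, Fin.sum_univ_three, sq] using h22

end IsSumOfThreeSquares

section QuadraticResidues

theorem jacobiSym_neg_eq_swap {p b : ℕ} (hp : Odd p) (hb : Odd b)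
    (h : p % 4 = 1 ∨ b % 4 = 3) : J(-b | p) = J(p | b) := by
  rw [jacobiSym.neg _ hp]
  rcases Nat.odd_mod_four_iff.mp (Nat.odd_iff.mp hp) with hp1 | hp3
  · rw [ZMod.χ₄_nat_one_mod_four hp1, one_mul, jacobiSym.quadratic_reciprocity_one_mod_four hp1 hb]
  · rw [ZMod.χ₄_nat_three_mod_four hp3,
      jacobiSym.quadratic_reciprocity_three_mod_four (by lia) hp3]
    ring

theorem jacobiSym_eq_one_of_mul_add_one_eq {k p b n : ℕ} (h : k * p + 1 = b * n)
    (hk : J(-k | b) = 1) : J(p | b) = 1 := by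
  have hmod : (-k * p : ℤ) % b = 1 % b := by
    have h' : (k * p + 1 : ℤ) = b * n := mod_cast h
    have : (-k * p : ℤ) = 1 + b * -n := by linear_combination -h'
    rw [this, Int.add_mul_emod_self_left]
  have := jacobiSym.mod_left' hmod
  rwa [jacobiSym.mul_left, hk, one_mul, jacobiSym.one_left] at this

theorem exists_two_mul_dvd_sq_add {p b : ℕ} (hp : p.Prime) (hpo : Odd p) (hb : Odd b)
    (h : J(-b | p) = 1) : ∃ t : ℤ, (2 * p : ℤ) ∣ t ^ 2 + b := by
  have := Fact.mk hp
  obtain ⟨r, hr⟩ := ZMod.isSquare_of_jacobiSym_eq_one h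
  obtain ⟨s, rfl⟩ := ZMod.intCast_surjective r
  have hs : (p : ℤ) ∣ s ^ 2 + b := by
    rw [← ZMod.intCast_zmod_eq_zero_iff_dvd]
    push_cast at hr ⊢
    linear_combination -hr
  obtain ⟨t, ht, hto⟩ : ∃ t : ℤ, (p : ℤ) ∣ t ^ 2 + b ∧ Odd t := by
    rcases Int.even_or_odd s with hse | hso
    · refine ⟨s + p, ?_, hse.add_odd (by exact_mod_cast hpo)⟩
      rw [show (s + p : ℤ) ^ 2 + b = s ^ 2 + b + p * (2 * s + p) by ring]
      exact dvd_add hs (dvd_mul_right _ _)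
    · exact ⟨s, hs, hso⟩
  refine ⟨t, IsCoprime.mul_dvd ?_ (hto.pow.add_odd (by exact_mod_cast hb)).two_dvd ht⟩
  exact_mod_cast Nat.isCoprime_iff_coprime.mpr (Nat.coprime_two_left.mpr hpo)

end QuadraticResidues

theorem exists_prime_mul_add_one_eq_mul {k r c n : ℕ} (hr : Odd r) (h : k * r + 1 = c * n) :
    ∃ p b, p.Prime ∧ k * p + 1 = b * n ∧ p ≡ r [MOD 4] ∧ b ≡ c [MOD 4 * k] := by
  have hn : n ≠ 0 := by
    rintro rfl
    simp at h
  have hrn : r.Coprime n := by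
    have h' : (k * r + 1 : ℤ) = c * n := mod_cast h
    exact Nat.isCoprime_iff_coprime.mp ⟨-k, c, by linear_combination -h'⟩
  have hr4n : r.Coprime (4 * n) :=
    .mul_right ((Nat.coprime_two_right.mpr hr).pow_right 2) hrn
  obtain ⟨p, hgt, hp, hmod⟩ := Nat.forall_exists_prime_gt_and_modEq r (by lia) hr4n
  obtain ⟨v, hv⟩ := (Nat.modEq_iff_dvd' hgt.le).mp hmod.symm
  obtain rfl : p = r + 4 * n * v := by lia
  refine ⟨_, c + 4 * k * v, hp, by linear_combination h, hmod.of_mul_right n, ?_⟩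
  simp [Nat.ModEq]

namespace IsSumOfThreeSquares

theorem of_jacobiSym_eq_one {k r c n : ℕ} (hk : k ∣ 2) (hr : Odd r) (hc : Odd c)
    (h : k * r + 1 = c * n) (hrc : r % 4 = 1 ∨ c % 4 = 3) (hJ : J(-k | c) = 1) :
    IsSumOfThreeSquares n := by
  obtain ⟨p, b, hp, hpb, hpr, hbc⟩ := exists_prime_mul_add_one_eq_mul hr h
  have hbc4 : b % 4 = c % 4 := hbc.of_mul_right k
  have hpr4 : p % 4 = r % 4 := hpr
  have hpo : Odd p := by
    rw [Nat.odd_iff] at hr ⊢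
    lia
  have hbo : Odd b := by
    rw [Nat.odd_iff] at hc ⊢
    lia
  have hJb : J(-k | b) = 1 := by
    rw [jacobiSym.mod_right _ hbo, Int.natAbs_neg, Int.natAbs_natCast, hbc]
    simpa [jacobiSym.mod_right _ hc] using hJ
  have hJp : J(-b | p) = 1 :=
    (jacobiSym_neg_eq_swap hpo hbo (by lia)).trans (jacobiSym_eq_one_of_mul_add_one_eq hpb hJb)
  obtain ⟨t, ht⟩ := exists_two_mul_dvd_sq_add hp hpo hbo hJp
  have hkp : (k * p : ℤ) = b * n - 1 := eq_sub_of_add_eq (mod_cast hpb)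
  have hkpos : 0 < k := Nat.pos_of_dvd_of_pos hk two_pos
  have hkp_pos : (0 : ℤ) < k * p := mod_cast Nat.mul_pos hkpos hp.pos
  refine of_dvd_sq_add (b := b) (t := t) (mod_cast hbo.pos) (by lia) ?_
  rw [← hkp]
  exact (mul_dvd_mul_right (mod_cast hk) _).trans ht

theorem of_not_four_dvd {n : ℕ} (h4 : ¬ 4 ∣ n) (h7 : n % 8 ≠ 7) : IsSumOfThreeSquares n := by
  have hcases : n % 4 = 2 ∨ n % 8 = 3 ∨ n % 4 = 1 := by lia
  rcases hcases with h | h | h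
  · exact of_jacobiSym_eq_one (k := 1) (r := n - 1) (c := 1) (by simp)
      (Nat.odd_iff.mpr (by lia)) odd_one (by lia) (by lia) (by simp)
  · exact of_jacobiSym_eq_one (k := 2) (r := (n - 1) / 2) (c := 1) (by simp)
      (Nat.odd_iff.mpr (by lia)) odd_one (by lia) (by lia) (by simp)
  · exact of_jacobiSym_eq_one (k := 2) (r := (3 * n - 1) / 2) (c := 3) (by simp)
      (Nat.odd_iff.mpr (by lia)) (by decide) (by lia) (by lia) (by norm_num)

theorem emod_eight_ne_seven {n : ℤ} (h : IsSumOfThreeSquares n) : n % 8 ≠ 7 := by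
  obtain ⟨a, b, c, rfl⟩ := h
  have key : ∀ x y z : ZMod 8, x ^ 2 + y ^ 2 + z ^ 2 ≠ 7 := by decide
  intro h7
  have hcast := (ZMod.intCast_eq_intCast_iff (a ^ 2 + b ^ 2 + c ^ 2) 7 8).mpr h7
  push_cast at hcast
  exact key a b c hcast

theorem four_mul_iff {n : ℤ} : IsSumOfThreeSquares (4 * n) ↔ IsSumOfThreeSquares n := by
  constructor
  · rintro ⟨a, b, c, h⟩
    have hsq (x : ℤ) : (x ^ 2 % 4 = 0 ∧ Even x) ∨ x ^ 2 % 4 = 1 := by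
      rcases Int.even_or_odd x with hx | hx
      · exact .inl ⟨Int.emod_eq_zero_of_dvd (pow_dvd_pow_of_dvd hx.two_dvd 2), hx⟩
      · exact .inr (Int.sq_mod_four_eq_one_of_odd hx)
    obtain ⟨⟨x, rfl⟩, ⟨y, rfl⟩, ⟨z, rfl⟩⟩ : Even a ∧ Even b ∧ Even c := by
      have := hsq a
      have := hsq b
      have := hsq c
      lia
    exact ⟨x, y, z, by linarith⟩
  · rintro ⟨a, b, c, rfl⟩
    exact ⟨2 * a, 2 * b, 2 * c, by ring⟩

theorem four_pow_mul_iff {n : ℤ} (k : ℕ) :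
    IsSumOfThreeSquares (4 ^ k * n) ↔ IsSumOfThreeSquares n := by
  induction k with
  | zero => rw [pow_zero, one_mul]
  | succ k ih => rw [pow_succ', mul_assoc, four_mul_iff, ih]

end IsSumOfThreeSquares

/-- Legendre's three-square theorem: a nonnegative integer `n` is a sum of three
squares of integers iff it is not of the form `4^k * (8*s + 7)`. -/
theorem three_squares (n : ℕ) :
    (∃ a b c : ℤ, (n : ℤ) = a ^ 2 + b ^ 2 + c ^ 2) ↔
      ¬ ∃ k s : ℕ, n = 4 ^ k * (8 * s + 7) := by
  change IsSumOfThreeSquares n ↔ _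
  constructor
  · rintro h ⟨k, s, rfl⟩
    push_cast at h
    have := ((IsSumOfThreeSquares.four_pow_mul_iff k).mp h).emod_eight_ne_seven
    lia
  · intro h
    rcases eq_or_ne n 0 with rfl | hn
    · exact ⟨0, 0, 0, by simp⟩
    obtain ⟨k, m, hm, rfl⟩ := Nat.exists_eq_pow_mul_and_not_dvd hn 4 (by norm_num)
    push_cast
    rw [IsSumOfThreeSquares.four_pow_mul_iff]
    exact .of_not_four_dvd hm fun hm7 ↦ h ⟨k, m / 8, by congr; lia⟩
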